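/- arXiv:2003.07020 — 5 statements merged into one kernel-verified Lean document; each statement's English description precedes it below -/
import Mathlib

section
/- Let N_t ≥ 2 be an integer and let C be the N_t×N_t BDF2 all-at-once time-stepping matrix. Then C is invertible and the maximum absolute row-sum norm of its inverse satisfies ‖C⁻¹‖_∞ ≤ (3 N_t)/2. -/
open Matrix Finset

/-- The `N_t × N_t` BDF2 all-at-once time-stepping matrix `C`:
`C₁₁ = 1`, `C_{ii} = 3/2` for `i ≥ 2`, `C_{i,i-1} = -2`, `C_{i,i-2} = 1/2`,
all other entries zero (here written with 0-based indices). -/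
noncomputable def bdf2C (Nt : ℕ) : Matrix (Fin Nt) (Fin Nt) ℝ :=
  Matrix.of fun i j =>
    if (i : ℕ) = (j : ℕ) then (if (i : ℕ) = 0 then 1 else 3 / 2)
    else if (i : ℕ) = (j : ℕ) + 1 then -2
    else if (i : ℕ) = (j : ℕ) + 2 then 1 / 2
    else 0

/-! Lower triangular Toeplitz matrices multiply like power series. Apart from a factor `2/3` on its
first row, `C` is the Toeplitz matrix of `3/2 - 2X + X²/2 = (1 - X)(3 - X)/2`, whose inverse
`1/(1 - X) - 1/(3 - X)` has coefficients `1 - 1/3^(k+1) ∈ [0, 1]`. So `C⁻¹` is a Toeplitz matrix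
with entries in `[0, 1]` whose first column is multiplied by `3/2`, and each of its rows has
absolute sum at most `3 N_t / 2`. -/

section LowerToeplitz

open PowerSeries

variable {R : Type*} [Semiring R]

/-- The `n × n` lower triangular Toeplitz matrix with symbol `f`: its `k`-th subdiagonal is
constantly equal to the `k`-th coefficient of `f`. -/
noncomputable def lowerToeplitz (n : ℕ) (f : R⟦X⟧) : Matrix (Fin n) (Fin n) R :=
  Matrix.of fun i j => if j ≤ i then coeff ((i : ℕ) - j) f else 0

lemma lowerToeplitz_apply_of_le {n : ℕ} (f : R⟦X⟧) {i j : Fin n} (h : j ≤ i) :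
    lowerToeplitz n f i j = coeff ((i : ℕ) - j) f :=
  if_pos h

lemma lowerToeplitz_apply_of_lt {n : ℕ} (f : R⟦X⟧) {i j : Fin n} (h : i < j) :
    lowerToeplitz n f i j = 0 :=
  if_neg h.not_ge

lemma lowerToeplitz_one (n : ℕ) : lowerToeplitz n (1 : R⟦X⟧) = 1 := by
  ext i j
  rcases lt_trichotomy i j with h | rfl | h
  · rw [lowerToeplitz_apply_of_lt _ h, one_apply_ne h.ne]
  · simp [lowerToeplitz_apply_of_le]
  · rw [lowerToeplitz_apply_of_le _ h.le, coeff_one, if_neg (Nat.sub_ne_zero_of_lt h),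
      one_apply_ne h.ne']

lemma sum_Icc_coeff_mul_coeff {n : ℕ} (f g : R⟦X⟧) {i j : Fin n} (h : j ≤ i) :
    ∑ k ∈ Icc j i, coeff ((i : ℕ) - k) f * coeff ((k : ℕ) - j) g
      = coeff ((i : ℕ) - j) (f * g) := by
  rw [coeff_mul]
  refine sum_bij' (fun k _ => ((i : ℕ) - k, (k : ℕ) - j))
    (fun p hp => ⟨j + p.2, by have := HasAntidiagonal.mem_antidiagonal.1 hp; omega⟩)
    ?_ ?_ ?_ ?_ ?_ <;>
    simp only [mem_Icc, HasAntidiagonal.mem_antidiagonal, Fin.le_def, Fin.ext_iff, Prod.ext_iff,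
      Prod.forall] <;>
    grind

lemma lowerToeplitz_mul (n : ℕ) (f g : R⟦X⟧) :
    lowerToeplitz n (f * g) = lowerToeplitz n f * lowerToeplitz n g := by
  ext i j
  have eq_zero_of_notMem : ∀ k ∉ Icc j i, lowerToeplitz n f i k * lowerToeplitz n g k j = 0 := by
    intro k hk
    rcases lt_or_ge k j with hkj | hjk
    · rw [lowerToeplitz_apply_of_lt g hkj, mul_zero]
    · have hik : i < k := not_le.1 fun hki => hk (mem_Icc.2 ⟨hjk, hki⟩)
      rw [lowerToeplitz_apply_of_lt f hik, zero_mul]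
  rw [mul_apply, ← sum_subset (subset_univ (Icc j i)) fun k _ => eq_zero_of_notMem k]
  rcases le_or_gt j i with h | h
  · rw [lowerToeplitz_apply_of_le _ h, ← sum_Icc_coeff_mul_coeff f g h]
    refine sum_congr rfl fun k hk => ?_
    obtain ⟨hjk, hki⟩ := mem_Icc.1 hk
    rw [lowerToeplitz_apply_of_le f hki, lowerToeplitz_apply_of_le g hjk]
  · rw [lowerToeplitz_apply_of_lt _ h, Icc_eq_empty h.not_ge, sum_empty]

lemma abs_lowerToeplitz_apply_le {n : ℕ} {f : ℝ⟦X⟧} {c : ℝ} (hf : ∀ k, |coeff k f| ≤ c)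
    (i j : Fin n) : |lowerToeplitz n f i j| ≤ c := by
  rcases lt_or_ge i j with h | h
  · rw [lowerToeplitz_apply_of_lt f h, abs_zero]
    exact (abs_nonneg _).trans (hf 0)
  · rw [lowerToeplitz_apply_of_le f h]
    exact hf _

end LowerToeplitz

section ScaleFirst

variable {R : Type*} [Semiring R]

/-- The diagonal matrix `diag(c, 1, …, 1)`, which multiplies the first row (acting from the left)
or the first column (acting from the right) by `c`. -/
def scaleFirst (n : ℕ) (c : R) : Matrix (Fin n) (Fin n) R :=
  diagonal fun i => if (i : ℕ) = 0 then c else 1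

lemma scaleFirst_mul_scaleFirst_of_mul_eq_one (n : ℕ) {c d : R} (h : c * d = 1) :
    scaleFirst n c * scaleFirst n d = 1 := by
  rw [scaleFirst, scaleFirst, diagonal_mul_diagonal, ← diagonal_one]
  congr 1
  ext i
  split_ifs <;> simp [h]

end ScaleFirst

lemma iSup_sum_abs_le_card_mul {m n : Type*} [Fintype n] {A : Matrix m n ℝ} {c : ℝ} (hc : 0 ≤ c)
    (hA : ∀ i j, |A i j| ≤ c) : ⨆ i, ∑ j, |A i j| ≤ Fintype.card n * c := by
  refine Real.iSup_le (fun i => ?_) (by positivity)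
  simpa using sum_le_card_nsmul univ (fun j => |A i j|) c fun j _ => hA i j

section Symbol

open PowerSeries

lemma sub_X_mul_sub_X_mul_invUnitsSub_sub {R : Type*} [CommRing R] (u v : Rˣ) :
    (C (u : R) - X) * (C (v : R) - X) * (invUnitsSub u - invUnitsSub v) = C (v - u : R) := by
  rw [map_sub]
  linear_combination (C (v : R) - X) * invUnitsSub_mul_sub u
    - (C (u : R) - X) * invUnitsSub_mul_sub v

/-- The generating polynomial `3/2 - 2X + X²/2` of the BDF2 difference formula, as a power
series. -/
noncomputable def bdf2Symbol : ℝ⟦X⟧ :=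
  C (3 / 2) - C 2 * X + C (1 / 2) * X ^ 2

/-- The power series inverse of `bdf2Symbol`, given by its coefficients. -/
noncomputable def bdf2InvSymbol : ℝ⟦X⟧ :=
  PowerSeries.mk fun k => 1 - (1 / 3) ^ (k + 1)

lemma bdf2Symbol_eq_mul : bdf2Symbol = C (1 / 2) * ((C 1 - X) * (C 3 - X)) := by
  have const_eq : (C (3 / 2) : ℝ⟦X⟧) = C (1 / 2) * C 3 := by rw [← map_mul]; norm_num
  have linear_eq : (C 2 : ℝ⟦X⟧) = C (1 / 2) * (C 1 + C 3) := by
    rw [← map_add, ← map_mul]; norm_num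
  rw [bdf2Symbol, const_eq, linear_eq, map_one]
  ring

lemma bdf2InvSymbol_eq_sub :
    bdf2InvSymbol = invUnitsSub 1 - invUnitsSub (Units.mk0 (3 : ℝ) three_ne_zero) := by
  ext k
  simp [bdf2InvSymbol, divp_eq_div]

lemma bdf2Symbol_mul_bdf2InvSymbol : bdf2Symbol * bdf2InvSymbol = 1 := by
  have h := sub_X_mul_sub_X_mul_invUnitsSub_sub 1 (Units.mk0 (3 : ℝ) three_ne_zero)
  rw [Units.val_one, Units.val_mk0, ← bdf2InvSymbol_eq_sub] at h
  rw [bdf2Symbol_eq_mul, mul_assoc, h, ← map_mul, ← map_one C]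
  norm_num

lemma abs_coeff_bdf2InvSymbol_le_one (k : ℕ) : |coeff k bdf2InvSymbol| ≤ 1 := by
  have h₀ : (0 : ℝ) ≤ (1 / 3) ^ (k + 1) := by positivity
  have h₁ : (1 / 3 : ℝ) ^ (k + 1) ≤ 1 := pow_le_one₀ (by norm_num) (by norm_num)
  rw [bdf2InvSymbol, coeff_mk, abs_le]
  constructor <;> linarith

lemma coeff_bdf2Symbol (k : ℕ) :
    coeff k bdf2Symbol =
      if k = 0 then 3 / 2 else if k = 1 then -2 else if k = 2 then 1 / 2 else 0 := by
  rcases k with _ | _ | _ | k <;> simp [bdf2Symbol, coeff_X_pow, coeff_C]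

end Symbol

lemma bdf2C_eq_scaleFirst_mul_lowerToeplitz (n : ℕ) :
    bdf2C n = scaleFirst n (2 / 3) * lowerToeplitz n bdf2Symbol := by
  ext i j
  rw [scaleFirst, diagonal_mul]
  rcases lt_or_ge i j with h | h
  · rw [lowerToeplitz_apply_of_lt _ h, mul_zero]
    simp only [bdf2C, of_apply]
    grind
  · rw [lowerToeplitz_apply_of_le _ h, coeff_bdf2Symbol]
    simp only [bdf2C, of_apply]
    grind

lemma bdf2C_mul_eq_one (n : ℕ) :
    bdf2C n * (lowerToeplitz n bdf2InvSymbol * scaleFirst n (3 / 2)) = 1 := by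
  calc
    _ = scaleFirst n (2 / 3) * (lowerToeplitz n bdf2Symbol * lowerToeplitz n bdf2InvSymbol)
          * scaleFirst n (3 / 2) := by
      simp only [bdf2C_eq_scaleFirst_mul_lowerToeplitz, Matrix.mul_assoc]
    _ = scaleFirst n (2 / 3) * scaleFirst n (3 / 2) := by
      rw [← lowerToeplitz_mul, bdf2Symbol_mul_bdf2InvSymbol, lowerToeplitz_one, Matrix.mul_one]
    _ = 1 := scaleFirst_mul_scaleFirst_of_mul_eq_one n (by norm_num)

lemma abs_bdf2C_inv_apply_le {n : ℕ} (i j : Fin n) : |(bdf2C n)⁻¹ i j| ≤ 3 / 2 := by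
  have scale_le : |if (j : ℕ) = 0 then (3 / 2 : ℝ) else 1| ≤ 3 / 2 := by
    split_ifs <;> norm_num
  rw [inv_eq_right_inv (bdf2C_mul_eq_one n), scaleFirst, mul_diagonal, abs_mul]
  calc
    _ ≤ 1 * (3 / 2 : ℝ) :=
      mul_le_mul (abs_lowerToeplitz_apply_le abs_coeff_bdf2InvSymbol_le_one i j) scale_le
        (abs_nonneg _) zero_le_one
    _ = 3 / 2 := one_mul _

/-- `C` is invertible and the maximum absolute row-sum norm (the operator norm induced by
the `ℓ∞` vector norm) of `C⁻¹` is at most `3 N_t / 2`. -/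
theorem stmt0 (Nt : ℕ) (hNt : 2 ≤ Nt) :
    IsUnit (bdf2C Nt) ∧
      (⨆ i : Fin Nt, ∑ j : Fin Nt, |(bdf2C Nt)⁻¹ i j|) ≤ 3 * (Nt : ℝ) / 2 := by
  refine ⟨IsUnit.of_mul_eq_one _ (bdf2C_mul_eq_one Nt), ?_⟩
  calc
    _ ≤ Fintype.card (Fin Nt) * (3 / 2 : ℝ) :=
      iSup_sum_abs_le_card_mul (by norm_num) abs_bdf2C_inv_apply_le
    _ = 3 * (Nt : ℝ) / 2 := by rw [Fintype.card_fin]; ring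
end

section
/- Let N_t ≥ 2 be an integer, let C be the N_t×N_t BDF2 all-at-once time-stepping matrix, let Ĉ = C + (1/2)·e₁e₁ᵀ, and let x ∈ ℝ^{N_t} be the vector with entries x_k = 1 − 3^{−k}. Then C⁻¹ = Ĉ⁻¹ + (1/2)·x e₁ᵀ. -/
open Matrix Finset

/-- The first standard basis vector `e₁` of `ℝ^{N_t}`. -/
noncomputable def e1 (Nt : ℕ) : Fin Nt → ℝ := fun i => if (i : ℕ) = 0 then 1 else 0

/-- `Ĉ = C + (1/2)·e₁e₁ᵀ`. -/
noncomputable def bdf2Chat (Nt : ℕ) : Matrix (Fin Nt) (Fin Nt) ℝ :=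
  bdf2C Nt + (1 / 2 : ℝ) • Matrix.vecMulVec (e1 Nt) (e1 Nt)

/-!
`Ĉ` is a rank-one update of `C`, so `C⁻¹ - Ĉ⁻¹` is the rank-one matrix `½ (Ĉ⁻¹ e₁) (e₁ᵀ C⁻¹)`.
The first row of `C` is `e₁ᵀ`, hence `e₁ᵀ C⁻¹ = e₁ᵀ`. Unlike `C`, the matrix `Ĉ` is Toeplitz, so
`Ĉ x = e₁` is the recurrence `3/2 x_k - 2 x_{k-1} + 1/2 x_{k-2} = 0` for `k ≥ 2`, with `x_0 = 0`
and `x_1 = 2/3`. Its characteristic roots are `1` and `1/3`, which gives `x_k = 1 - 3^{-k}`.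
-/

theorem inv_eq_inv_add_vecMulVec {n R : Type*} [Fintype n] [DecidableEq n] [CommRing R]
    {A : Matrix n n R} {u v x z : n → R} (hdet : IsUnit (A + vecMulVec u v).det)
    (hx : (A + vecMulVec u v) *ᵥ x = u) (hz : z ᵥ* A = v) :
    A⁻¹ = (A + vecMulVec u v)⁻¹ + vecMulVec x z := by
  set B := A + vecMulVec u v with hB
  have hx' : x = B⁻¹ *ᵥ u := by
    rw [← hx, mulVec_mulVec, nonsing_inv_mul _ hdet, one_mulVec]
  apply inv_eq_left_inv
  calc (B⁻¹ + vecMulVec x z) * A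
      = B⁻¹ * A + vecMulVec x v := by rw [add_mul, vecMulVec_mul, hz]
    _ = B⁻¹ * B := by rw [hx', ← mul_vecMulVec, ← mul_add, ← hB]
    _ = 1 := nonsing_inv_mul _ hdet

theorem sum_fin_ite_add_eq {M : Type*} [AddCommMonoid M] {n : ℕ} (f : ℕ → M) (i : Fin n) (d : ℕ) :
    ∑ j : Fin n, (if (j : ℕ) + d = i then f j else 0) = if d ≤ (i : ℕ) then f (i - d) else 0 := by
  split_ifs with hd
  · rw [sum_eq_single (⟨i - d, by omega⟩ : Fin n)]
    · exact if_pos (Nat.sub_add_cancel hd)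
    · intro j _ hj
      exact if_neg fun h => hj (Fin.ext (Nat.eq_sub_of_add_eq h))
    · simp
  · exact sum_eq_zero fun j _ => if_neg (by omega)

section BDF2

variable (Nt : ℕ)

theorem e1_vecMul_bdf2C : e1 Nt ᵥ* bdf2C Nt = e1 Nt := by
  funext j
  have hterm (i : Fin Nt) : e1 Nt i * bdf2C Nt i j = if i = j then e1 Nt i else 0 := by
    simp only [e1, bdf2C, of_apply, Fin.ext_iff]
    split_ifs <;> first | omega | norm_num
  simp only [vecMul, dotProduct, hterm, sum_ite_eq', mem_univ, if_true]

-- The `+ 0` puts all three diagonals in the shape of `sum_fin_ite_add_eq`.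
theorem bdf2Chat_apply (i j : Fin Nt) :
    bdf2Chat Nt i j =
      (if (j : ℕ) + 0 = i then 3 / 2 else 0) + (if (j : ℕ) + 1 = i then -2 else 0) +
        (if (j : ℕ) + 2 = i then 1 / 2 else 0) := by
  simp only [bdf2Chat, bdf2C, e1, Matrix.add_apply, Matrix.smul_apply, vecMulVec_apply, of_apply,
    smul_eq_mul]
  split_ifs <;> first | omega | norm_num

theorem bdf2Chat_isLowerTriangular : (bdf2Chat Nt).IsLowerTriangular := by
  intro i j hij
  have hlt : (i : ℕ) < j := hij
  rw [bdf2Chat_apply, if_neg (by omega), if_neg (by omega), if_neg (by omega), add_zero, add_zero]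

theorem det_bdf2Chat : (bdf2Chat Nt).det = (3 / 2) ^ Nt := by
  rw [det_of_isLowerTriangular _ (bdf2Chat_isLowerTriangular Nt)]
  simp [bdf2Chat_apply, div_pow]

theorem bdf2Chat_mulVec_apply (y : ℕ → ℝ) (i : Fin Nt) :
    (bdf2Chat Nt *ᵥ fun j => y j) i =
      3 / 2 * y i + (if 1 ≤ (i : ℕ) then -2 * y (i - 1) else 0) +
        (if 2 ≤ (i : ℕ) then 1 / 2 * y (i - 2) else 0) := by
  simp only [mulVec, dotProduct, bdf2Chat_apply, add_mul, ite_mul, zero_mul, sum_add_distrib]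
  rw [sum_fin_ite_add_eq (fun k => 3 / 2 * y k), sum_fin_ite_add_eq (fun k => -2 * y k),
    sum_fin_ite_add_eq (fun k => 1 / 2 * y k), if_pos (Nat.zero_le _), Nat.sub_zero]

theorem bdf2Chat_mulVec_one_sub_pow :
    bdf2Chat Nt *ᵥ (fun i => 1 - (1 / 3 : ℝ) ^ ((i : ℕ) + 1)) = e1 Nt := by
  funext i
  rw [bdf2Chat_mulVec_apply Nt (fun k => 1 - (1 / 3 : ℝ) ^ (k + 1)), e1]
  rcases (i : ℕ) with _ | _ | k
  · norm_num
  · norm_num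
  · rw [if_pos (by omega), if_pos (by omega), if_neg (by omega),
      show k + 1 + 1 - 1 = k + 1 from rfl, show k + 1 + 1 - 2 = k from rfl]
    ring

end BDF2

/-- With `x_k = 1 − 3^{−k}` (0-based: `x i = 1 − 3^{−(i+1)}`), one has
`C⁻¹ = Ĉ⁻¹ + (1/2)·x e₁ᵀ`. -/
theorem stmt4 (Nt : ℕ) (hNt : 2 ≤ Nt) :
    (bdf2C Nt)⁻¹ =
      (bdf2Chat Nt)⁻¹ +
        (1 / 2 : ℝ) •
          Matrix.vecMulVec (fun i : Fin Nt => 1 - (1 / 3 : ℝ) ^ ((i : ℕ) + 1)) (e1 Nt) := by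
  have hChat : bdf2Chat Nt = bdf2C Nt + vecMulVec ((1 / 2 : ℝ) • e1 Nt) (e1 Nt) := by
    rw [bdf2Chat, smul_vecMulVec]
  have hdet : IsUnit (bdf2Chat Nt).det := by
    rw [det_bdf2Chat, isUnit_iff_ne_zero]
    positivity
  have hx : bdf2Chat Nt *ᵥ ((1 / 2 : ℝ) • fun i : Fin Nt => 1 - (1 / 3 : ℝ) ^ ((i : ℕ) + 1)) =
      (1 / 2 : ℝ) • e1 Nt := by
    rw [mulVec_smul, bdf2Chat_mulVec_one_sub_pow]
  rw [hChat] at hdet hx ⊢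
  rw [← smul_vecMulVec]
  exact inv_eq_inv_add_vecMulVec hdet hx (e1_vecMul_bdf2C Nt)
end

section
/- Let N_t ≥ 2 be an integer and let C be the N_t×N_t BDF2 all-at-once time-stepping matrix. Then ‖C⁻¹‖₂ ≤ N_t·√(3/2); equivalently, the smallest singular value of C satisfies σ_min(C) ≥ √6/(3 N_t), i.e., ‖C z‖₂ ≥ (√6/(3 N_t))·‖z‖₂ for every z ∈ ℝ^{N_t}. -/
open Matrix Finset

/-- The Euclidean (`ℓ²`) norm of a vector. -/
noncomputable def l2norm {n : Type*} [Fintype n] (x : n → ℝ) : ℝ :=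
  Real.sqrt (∑ i, x i ^ 2)

/-- The spectral norm (largest singular value) of a square real matrix. -/
noncomputable def specNorm {n : Type*} [Fintype n] (M : Matrix n n ℝ) : ℝ :=
  sSup {c | ∃ x : n → ℝ, l2norm x = 1 ∧ c = l2norm (M *ᵥ x)}

/-!
The inverse of `C` is known in closed form. Its entries are nonnegative and at most `3 / 2`, so its
column sums are at most `3 N_t / 2`; its row sums are the grid indices `1, …, N_t`, because the
scheme differentiates linear functions exactly. The bound `‖M‖₂ ≤ √(‖M‖_∞ ‖M‖₁)` then gives
`‖C⁻¹‖₂ ≤ N_t √(3 / 2)`, and applying `C⁻¹` to `C z` gives the lower bound on `‖C z‖₂`.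
-/

section SchurTest

variable {m n : Type*} [Fintype n]

lemma sq_mulVec_le_sum_abs_mul (A : Matrix m n ℝ) (x : n → ℝ) (i : m) :
    (A *ᵥ x) i ^ 2 ≤ (∑ j, |A i j|) * ∑ j, |A i j| * x j ^ 2 :=
  sum_sq_le_sum_mul_sum_of_sq_le_mul _ (fun _ _ => abs_nonneg _) (fun _ _ => by positivity)
    fun j _ => by rw [mul_pow, ← sq_abs (A i j), ← mul_assoc, sq |A i j|]

lemma l2norm_mulVec_le_sqrt_mul [Fintype m] {A : Matrix m n ℝ} {r c : ℝ}
    (hr : ∀ i, ∑ j, |A i j| ≤ r) (hc : ∀ j, ∑ i, |A i j| ≤ c) (x : n → ℝ) :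
    l2norm (A *ᵥ x) ≤ √(r * c) * l2norm x := by
  rcases isEmpty_or_nonempty m with _ | ⟨⟨i₀⟩⟩
  · simp only [l2norm, univ_eq_empty, sum_empty, Real.sqrt_zero]
    positivity
  have hr₀ : 0 ≤ r := (sum_nonneg fun _ _ => abs_nonneg _).trans (hr i₀)
  have hsq : ∑ i, (A *ᵥ x) i ^ 2 ≤ r * c * ∑ j, x j ^ 2 :=
    calc ∑ i, (A *ᵥ x) i ^ 2
        ≤ ∑ i, r * ∑ j, |A i j| * x j ^ 2 := sum_le_sum fun i _ =>
          (sq_mulVec_le_sum_abs_mul A x i).trans <| by gcongr; exact hr i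
      _ = r * ∑ j, (∑ i, |A i j|) * x j ^ 2 := by
          rw [← mul_sum, sum_comm]
          simp only [sum_mul]
      _ ≤ r * ∑ j, c * x j ^ 2 := by gcongr with j; exact hc j
      _ = r * c * ∑ j, x j ^ 2 := by rw [← mul_sum, mul_assoc]
  calc l2norm (A *ᵥ x)
      ≤ √(r * c * ∑ j, x j ^ 2) := Real.sqrt_le_sqrt hsq
    _ = √(r * c) * l2norm x := Real.sqrt_mul' _ (sum_nonneg fun _ _ => sq_nonneg _)

lemma specNorm_le_of_l2norm_mulVec_le {M : Matrix n n ℝ} {c : ℝ} (hc : 0 ≤ c)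
    (h : ∀ x, l2norm (M *ᵥ x) ≤ c * l2norm x) : specNorm M ≤ c := by
  refine Real.sSup_le ?_ hc
  rintro _ ⟨x, hx, rfl⟩
  simpa only [hx, mul_one] using h x

end SchurTest

/-- The BDF2 scheme with unit step on sequences, started with the value `f 0` at time `0` and with
`f (-1) = 0` at time `1`. It is the row-by-row action of `bdf2C`, independent of the size. -/
noncomputable def bdf2Diff (f : ℕ → ℝ) : ℕ → ℝ
  | 0 => f 0
  | 1 => 3 / 2 * f 1 - 2 * f 0
  | k + 2 => 3 / 2 * f (k + 2) - 2 * f (k + 1) + 1 / 2 * f k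

lemma bdf2C_row_zero {n : ℕ} (h : 0 < n) : bdf2C n ⟨0, h⟩ = Pi.single ⟨0, h⟩ 1 := by
  ext j
  simp only [bdf2C, of_apply, Pi.single_apply, Fin.ext_iff]
  grind

lemma bdf2C_row_one {n : ℕ} (h : 1 < n) :
    bdf2C n ⟨1, h⟩ = Pi.single ⟨1, h⟩ (3 / 2) + Pi.single ⟨0, by lia⟩ (-2) := by
  ext j
  simp only [bdf2C, of_apply, Pi.add_apply, Pi.single_apply, Fin.ext_iff]
  grind

lemma bdf2C_row_add_two {n k : ℕ} (h : k + 2 < n) :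
    bdf2C n ⟨k + 2, h⟩ = Pi.single ⟨k + 2, h⟩ (3 / 2) + Pi.single ⟨k + 1, by lia⟩ (-2) +
      Pi.single ⟨k, by lia⟩ (1 / 2) := by
  ext j
  simp only [bdf2C, of_apply, Pi.add_apply, Pi.single_apply, Fin.ext_iff]
  grind

lemma bdf2C_mulVec_apply {n : ℕ} (f : ℕ → ℝ) (i : Fin n) :
    (bdf2C n *ᵥ fun j => f j) i = bdf2Diff f i := by
  obtain ⟨_ | _ | k, hi⟩ := i
  · simp only [mulVec, bdf2C_row_zero, single_dotProduct, bdf2Diff, one_mul]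
  · simp only [mulVec, zero_add, bdf2C_row_one, add_dotProduct, single_dotProduct, bdf2Diff]
    ring
  · simp only [mulVec, bdf2C_row_add_two, add_dotProduct, single_dotProduct, bdf2Diff]
    ring

lemma bdf2Diff_natCast_add_one (i : ℕ) : bdf2Diff (fun k => (k : ℝ) + 1) i = 1 := by
  rcases i with _ | _ | k <;> simp only [bdf2Diff] <;> push_cast <;> ring

/-- The `(i, j)` entry of the inverse of `bdf2C`, from the roots `1` and `1 / 3` of the
characteristic polynomial of BDF2. Truncated subtraction makes it vanish above the diagonal;
column `0` differs because the first step is not a BDF2 step. -/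
noncomputable def bdf2InvEntry (i j : ℕ) : ℝ :=
  (if j = 0 then 3 / 2 else 1) * (1 - (1 / 3) ^ (i + 1 - j))

lemma bdf2InvEntry_eq_zero_of_lt {i j : ℕ} (h : i < j) : bdf2InvEntry i j = 0 := by
  rw [bdf2InvEntry, Nat.sub_eq_zero_of_le h, pow_zero, sub_self, mul_zero]

lemma bdf2InvEntry_nonneg (i j : ℕ) : 0 ≤ bdf2InvEntry i j := by
  have hpow : (1 / 3 : ℝ) ^ (i + 1 - j) ≤ 1 := pow_le_one₀ (by norm_num) (by norm_num)
  refine mul_nonneg ?_ (sub_nonneg.2 hpow)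
  split_ifs <;> norm_num

lemma bdf2InvEntry_le (i j : ℕ) : bdf2InvEntry i j ≤ 3 / 2 := by
  have hpow : (0 : ℝ) ≤ (1 / 3) ^ (i + 1 - j) := by positivity
  rw [bdf2InvEntry]
  split_ifs <;> linarith

lemma bdf2Diff_bdf2InvEntry (i j : ℕ) :
    bdf2Diff (fun k => bdf2InvEntry k j) i = if i = j then 1 else 0 := by
  rcases lt_trichotomy i j with hij | rfl | hji
  · rcases i with _ | _ | k <;> grind [bdf2Diff, bdf2InvEntry_eq_zero_of_lt]
  · rcases i with _ | _ | k <;> norm_num [bdf2Diff, bdf2InvEntry]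
  · rcases i with _ | _ | k
    · lia
    · obtain rfl : j = 0 := by lia
      norm_num [bdf2Diff, bdf2InvEntry]
    · obtain ⟨d, hd⟩ := Nat.exists_eq_add_of_le (Nat.le_of_lt_succ hji)
      have h₂ : k + 2 + 1 - j = d + 2 := by lia
      have h₁ : k + 1 + 1 - j = d + 1 := by lia
      have h₀ : k + 1 - j = d := by lia
      rw [if_neg hji.ne', bdf2Diff]
      simp only [bdf2InvEntry, h₂, h₁, h₀]
      ring

/-- The closed form of the inverse of `bdf2C n`, used to bound its row and column sums. -/
noncomputable def bdf2Inv (n : ℕ) : Matrix (Fin n) (Fin n) ℝ :=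
  Matrix.of fun i j => bdf2InvEntry i j

lemma bdf2C_mul_bdf2Inv (n : ℕ) : bdf2C n * bdf2Inv n = 1 := by
  ext i j
  calc (bdf2C n * bdf2Inv n) i j
      = bdf2Diff (fun k => bdf2InvEntry k j) i := bdf2C_mulVec_apply (bdf2InvEntry · j) i
    _ = (1 : Matrix (Fin n) (Fin n) ℝ) i j := by
        simp only [bdf2Diff_bdf2InvEntry, one_apply, Fin.ext_iff]

lemma bdf2Inv_mul_bdf2C (n : ℕ) : bdf2Inv n * bdf2C n = 1 :=
  mul_eq_one_comm.1 (bdf2C_mul_bdf2Inv n)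

lemma bdf2Inv_mulVec_one (n : ℕ) : bdf2Inv n *ᵥ 1 = fun i : Fin n => ((i : ℕ) : ℝ) + 1 := by
  have hlin : bdf2C n *ᵥ (fun i : Fin n => ((i : ℕ) : ℝ) + 1) = 1 := by
    ext i
    exact (bdf2C_mulVec_apply (fun k => (k : ℝ) + 1) i).trans (bdf2Diff_natCast_add_one i)
  rw [← hlin, mulVec_mulVec, bdf2Inv_mul_bdf2C, one_mulVec]

lemma abs_bdf2Inv_apply {n : ℕ} (i j : Fin n) : |bdf2Inv n i j| = bdf2Inv n i j :=
  abs_of_nonneg (bdf2InvEntry_nonneg i j)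

lemma sum_abs_bdf2Inv_row_le {n : ℕ} (i : Fin n) : ∑ j, |bdf2Inv n i j| ≤ n :=
  calc ∑ j, |bdf2Inv n i j|
      = (bdf2Inv n *ᵥ 1) i := by simp only [abs_bdf2Inv_apply, mulVec, dotProduct_one]
    _ = (i : ℕ) + 1 := by rw [bdf2Inv_mulVec_one]
    _ ≤ n := by exact_mod_cast i.isLt

lemma sum_abs_bdf2Inv_col_le {n : ℕ} (j : Fin n) : ∑ i, |bdf2Inv n i j| ≤ n * (3 / 2) :=
  calc ∑ i, |bdf2Inv n i j|
      ≤ ∑ _i : Fin n, (3 / 2 : ℝ) := sum_le_sum fun i _ =>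
        (abs_bdf2Inv_apply i j).trans_le (bdf2InvEntry_le i j)
    _ = n * (3 / 2) := by rw [sum_const, card_univ, Fintype.card_fin, nsmul_eq_mul]

lemma l2norm_bdf2Inv_mulVec_le {n : ℕ} (x : Fin n → ℝ) :
    l2norm (bdf2Inv n *ᵥ x) ≤ n * √(3 / 2) * l2norm x := by
  have hsqrt : √((n : ℝ) * (n * (3 / 2))) = n * √(3 / 2) := by
    rw [← mul_assoc, ← sq, Real.sqrt_mul (sq_nonneg _), Real.sqrt_sq n.cast_nonneg]
  exact hsqrt ▸ l2norm_mulVec_le_sqrt_mul sum_abs_bdf2Inv_row_le sum_abs_bdf2Inv_col_le x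

/-- `‖C⁻¹‖₂ ≤ N_t √(3/2)`; equivalently, the smallest singular value of `C` satisfies
`σ_min(C) ≥ √6/(3 N_t)`, i.e. `‖C z‖₂ ≥ (√6/(3 N_t)) ‖z‖₂` for every `z`. -/
theorem stmt7 (Nt : ℕ) (hNt : 2 ≤ Nt) :
    specNorm ((bdf2C Nt)⁻¹) ≤ (Nt : ℝ) * Real.sqrt (3 / 2) ∧
      ∀ z : Fin Nt → ℝ,
        (Real.sqrt 6 / (3 * (Nt : ℝ))) * l2norm z ≤ l2norm (bdf2C Nt *ᵥ z) := by
  constructor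
  · rw [inv_eq_right_inv (bdf2C_mul_bdf2Inv Nt)]
    exact specNorm_le_of_l2norm_mulVec_le (by positivity) l2norm_bdf2Inv_mulVec_le
  · intro z
    have : (0 : ℝ) < Nt := by exact_mod_cast two_pos.trans_le hNt
    have hz : l2norm z ≤ Nt * √(3 / 2) * l2norm (bdf2C Nt *ᵥ z) := by
      simpa only [mulVec_mulVec, bdf2Inv_mul_bdf2C, one_mulVec] using
        l2norm_bdf2Inv_mulVec_le (bdf2C Nt *ᵥ z)
    have hsqrt : √6 * √(3 / 2) = 3 := by
      rw [← Real.sqrt_mul (by norm_num), Real.sqrt_eq_iff_mul_self_eq] <;> norm_num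
    have hconst : √6 / (3 * Nt) = ((Nt : ℝ) * √(3 / 2))⁻¹ := by
      refine eq_inv_of_mul_eq_one_left ?_
      field_simp
      linarith
    rw [hconst]
    exact (inv_mul_le_iff₀ (by positivity)).2 hz
end

section
/- Let N_t ≥ 3 and N_s ≥ 1 be integers, let α ∈ (0,1), let C be the N_t×N_t BDF2 all-at-once time-stepping matrix, let C_α be the N_t×N_t Strang-type α-circulant matrix, let A be a real symmetric negative semidefinite N_s×N_s matrix, let τ > 0, and set 𝒜 = C ⊗ I_{N_s} − τ·(I_{N_t} ⊗ A) and 𝒫_α = C_α ⊗ I_{N_s} − τ·(I_{N_t} ⊗ A). Then 𝒫_α⁻¹𝒜 = I + ℒ where ℒ = 𝒫_α⁻¹·((C − C_α) ⊗ I_{N_s}), the matrix C − C_α has rank 2, and rank(ℒ) = 2·N_s. -/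
open Matrix Finset Kronecker

/-- The `N_t × N_t` Strang-type α-circulant matrix `C_α` (0-based indices). -/
noncomputable def strangCalpha (Nt : ℕ) (α : ℝ) : Matrix (Fin Nt) (Fin Nt) ℝ :=
  Matrix.of fun i j =>
    if (i : ℕ) = (j : ℕ) then 3 / 2
    else if (i : ℕ) = (j : ℕ) + 1 then -2
    else if (i : ℕ) = (j : ℕ) + 2 then 1 / 2
    else if (i : ℕ) = 0 ∧ (j : ℕ) = Nt - 2 then α / 2
    else if (i : ℕ) = 0 ∧ (j : ℕ) = Nt - 1 then -2 * α
    else if (i : ℕ) = 1 ∧ (j : ℕ) = Nt - 1 then α / 2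
    else 0

/-! BDF2 is G-stable: with `E(a, b) = (a² + (2a - b)²) / 4`,
`(3/2 a - 2 b + 1/2 c) a = E(a, b) - E(b, c) + (a - 2 b + c)² / 4`.
The matrix `C_α` applies the BDF2 difference to `u` preceded by the two ghost values
`α u_{N-2}` and `α u_{N-1}`, so summing the identity telescopes to
`u · C_α u = (1 - α²) E(u_{N-1}, u_{N-2}) + ∑ (second differences)² / 4`, which is positive for
`u ≠ 0` when `|α| < 1`. A dissipative `A` preserves this positivity, hence `𝒫_α` is invertible
and `rank ℒ = rank ((C - C_α) ⊗ I) = rank (C - C_α) * N_s`.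
-/

section Rank

variable {m n m' n' κ : Type*} [Fintype n] [Fintype n']

theorem rank_kronecker {K : Type*} [Field K] [Finite m] [Finite m']
    (A : Matrix m n K) (B : Matrix m' n' K) : (A ⊗ₖ B).rank = A.rank * B.rank := by
  classical
  let bm := Pi.basisFun K m
  let bn := Pi.basisFun K n
  let bm' := Pi.basisFun K m'
  let bn' := Pi.basisFun K n'
  let f := toLin bn bm A
  let g := toLin bn' bm' B
  have range_map : (TensorProduct.map f g).range =
      (TensorProduct.mapIncl f.range g.range).range := by
    rw [TensorProduct.range_map, TensorProduct.range_mapIncl]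
  have mapIncl_injective : Function.Injective (TensorProduct.mapIncl f.range g.range) :=
    TensorProduct.map_injective_of_flat_flat _ _ f.range.injective_subtype g.range.injective_subtype
  rw [rank_eq_finrank_range_toLin _ (bm.tensorProduct bm') (bn.tensorProduct bn'),
    toLin_kronecker, range_map, LinearMap.finrank_range_of_inj mapIncl_injective,
    Module.finrank_tensorProduct, rank_eq_finrank_range_toLin A bm bn,
    rank_eq_finrank_range_toLin B bm' bn']

theorem rank_eq_card_of_det_submatrix_ne_zero {R : Type*} [CommRing R] [IsDomain R]
    [Fintype κ] [DecidableEq κ] (A : Matrix m n R) (r : κ → m) (c : κ → n)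
    (hr : Function.support A.row ⊆ Set.range r) (hdet : (A.submatrix r c).det ≠ 0) :
    A.rank = Fintype.card κ := by
  classical
  refine le_antisymm ?_ ?_
  · calc A.rank ≤ (univ.image r).card := A.rank_le_card_of_support_subset _ (by simpa using hr)
      _ ≤ Fintype.card κ := card_image_le
  · calc Fintype.card κ = (A.submatrix r c).rank := (rank_of_det_ne_zero hdet).symm
      _ ≤ A.rank := A.rank_submatrix_le r c

end Rank

theorem inv_mul_eq_one_add_inv_mul_sub {R n : Type*} [CommRing R] [Fintype n] [DecidableEq n]
    (M : Matrix n n R) {P : Matrix n n R} (hP : IsUnit P.det) :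
    P⁻¹ * M = 1 + P⁻¹ * (M - P) := by
  rw [Matrix.mul_sub, nonsing_inv_mul P hP, add_sub_cancel]

theorem det_ne_zero_of_dotProduct_mulVec_pos {R n : Type*} [CommRing R] [LinearOrder R]
    [IsStrictOrderedRing R] [Fintype n] [DecidableEq n] {M : Matrix n n R}
    (hM : ∀ v ≠ 0, 0 < v ⬝ᵥ (M *ᵥ v)) : M.det ≠ 0 := by
  intro hdet
  obtain ⟨v, hv, hMv⟩ := exists_mulVec_eq_zero_iff.2 hdet
  simpa [hMv] using hM v hv

section AllAtOnce

variable {R m n : Type*}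

theorem dotProduct_kronecker_one_mulVec [Semiring R] [Fintype m] [Fintype n] [DecidableEq n]
    (B : Matrix m m R) (x : m × n → R) :
    x ⬝ᵥ ((B ⊗ₖ (1 : Matrix n n R)) *ᵥ x) =
      ∑ s, (fun i ↦ x (i, s)) ⬝ᵥ (B *ᵥ fun i ↦ x (i, s)) := by
  simp only [dotProduct, mulVec, Fintype.sum_prod_type_right, kroneckerMap_apply, one_apply,
    mul_ite, mul_one, mul_zero, ite_mul, zero_mul, sum_ite_irrel, sum_const_zero,
    sum_ite_eq, mem_univ, if_true]

theorem dotProduct_one_kronecker_mulVec [Semiring R] [Fintype m] [Fintype n] [DecidableEq m]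
    (A : Matrix n n R) (x : m × n → R) :
    x ⬝ᵥ (((1 : Matrix m m R) ⊗ₖ A) *ᵥ x) =
      ∑ i, (fun s ↦ x (i, s)) ⬝ᵥ (A *ᵥ fun s ↦ x (i, s)) := by
  simp [dotProduct, mulVec, Fintype.sum_prod_type, kroneckerMap_apply, one_apply]

/-- The all-at-once matrix `B ⊗ I - τ (I ⊗ A)` of a time-stepping scheme with time matrix `B` and
step size `τ` for the linear system `u' = A u`. It is `𝒜` for `B = C` and `𝒫_α` for `B = C_α`. -/
abbrev allAtOnce [DecidableEq m] [DecidableEq n] [Ring R] (B : Matrix m m R)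
    (A : Matrix n n R) (τ : R) : Matrix (m × n) (m × n) R :=
  B ⊗ₖ (1 : Matrix n n R) - τ • ((1 : Matrix m m R) ⊗ₖ A)

theorem allAtOnce_sub_allAtOnce [DecidableEq m] [DecidableEq n] [Ring R] (B B' : Matrix m m R)
    (A : Matrix n n R) (τ : R) :
    allAtOnce B A τ - allAtOnce B' A τ = (B - B') ⊗ₖ (1 : Matrix n n R) := by
  rw [sub_sub_sub_cancel_right, sub_eq_iff_eq_add, ← add_kronecker, sub_add_cancel]

theorem dotProduct_allAtOnce_mulVec_pos [Fintype m] [Fintype n] [DecidableEq m] [DecidableEq n]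
    [CommRing R] [LinearOrder R] [IsStrictOrderedRing R]
    {B : Matrix m m R} {A : Matrix n n R} {τ : R} (hB : ∀ u ≠ 0, 0 < u ⬝ᵥ (B *ᵥ u))
    (hA : ∀ z, z ⬝ᵥ (A *ᵥ z) ≤ 0) (hτ : 0 ≤ τ) {x : m × n → R} (hx : x ≠ 0) :
    0 < x ⬝ᵥ (allAtOnce B A τ *ᵥ x) := by
  have hB_nonneg (u : m → R) : 0 ≤ u ⬝ᵥ (B *ᵥ u) := by
    obtain rfl | hu := eq_or_ne u 0
    · simp
    · exact (hB u hu).le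
  obtain ⟨⟨i, s⟩, his⟩ := Function.ne_iff.1 hx
  have htime : 0 < x ⬝ᵥ ((B ⊗ₖ (1 : Matrix n n R)) *ᵥ x) := by
    rw [dotProduct_kronecker_one_mulVec]
    exact sum_pos' (fun _ _ ↦ hB_nonneg _) ⟨s, mem_univ s, hB _ (Function.ne_iff.2 ⟨i, his⟩)⟩
  have hspace : x ⬝ᵥ (((1 : Matrix m m R) ⊗ₖ A) *ᵥ x) ≤ 0 := by
    rw [dotProduct_one_kronecker_mulVec]
    exact sum_nonpos fun _ _ ↦ hA _
  rw [sub_mulVec, dotProduct_sub, smul_mulVec, dotProduct_smul, smul_eq_mul]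
  exact sub_pos.2 ((mul_nonpos_of_nonneg_of_nonpos hτ hspace).trans_lt htime)

end AllAtOnce

section GStability

/-- The difference operator `3/2 w_{k+2} - 2 w_{k+1} + 1/2 w_k` of the BDF2 scheme with unit step,
indexed by the oldest of the three values. -/
noncomputable def bdf2Difference (w : ℕ → ℝ) (k : ℕ) : ℝ :=
  3 / 2 * w (k + 2) - 2 * w (k + 1) + 1 / 2 * w k

/-- The squared G-norm of two consecutive values of a BDF2 solution, the newer value `a` first. -/
noncomputable def bdf2Energy (a b : ℝ) : ℝ :=
  (a ^ 2 + (2 * a - b) ^ 2) / 4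

theorem bdf2Energy_nonneg (a b : ℝ) : 0 ≤ bdf2Energy a b := by
  unfold bdf2Energy
  positivity

theorem eq_zero_of_bdf2Energy_eq_zero {a b : ℝ} (h : bdf2Energy a b = 0) : a = 0 ∧ b = 0 := by
  have ha : a = 0 := by
    unfold bdf2Energy at h
    nlinarith [sq_nonneg a, sq_nonneg (2 * a - b)]
  subst ha
  simpa [bdf2Energy] using h

theorem bdf2Energy_mul_mul (α a b : ℝ) :
    bdf2Energy (α * a) (α * b) = α ^ 2 * bdf2Energy a b := by
  unfold bdf2Energy
  ring

theorem bdf2Difference_mul_self (w : ℕ → ℝ) (k : ℕ) :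
    bdf2Difference w k * w (k + 2) =
      bdf2Energy (w (k + 2)) (w (k + 1)) - bdf2Energy (w (k + 1)) (w k) +
        (w (k + 2) - 2 * w (k + 1) + w k) ^ 2 / 4 := by
  unfold bdf2Difference bdf2Energy
  ring

theorem sum_bdf2Difference_mul_self (w : ℕ → ℝ) (N : ℕ) :
    ∑ k ∈ range N, bdf2Difference w k * w (k + 2) =
      bdf2Energy (w (N + 1)) (w N) - bdf2Energy (w 1) (w 0) +
        ∑ k ∈ range N, (w (k + 2) - 2 * w (k + 1) + w k) ^ 2 / 4 := by
  simp only [bdf2Difference_mul_self, sum_add_distrib,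
    sum_range_sub fun k ↦ bdf2Energy (w (k + 1)) (w k)]

theorem eq_zero_of_second_difference_eq_zero {R : Type*} [CommRing R] {w : ℕ → R} {N : ℕ}
    (h0 : w 0 = 0) (h1 : w 1 = 0) (h : ∀ k < N, w (k + 2) - 2 * w (k + 1) + w k = 0) :
    ∀ k < N + 2, w k = 0 := by
  intro k
  induction k using Nat.twoStepInduction with
  | zero => exact fun _ ↦ h0
  | one => exact fun _ ↦ h1
  | more k ih ih' =>
    intro hk
    linear_combination h k (by lia) + 2 * ih' (by lia) - ih (by lia)

theorem sum_bdf2Difference_mul_self_pos {α : ℝ} (hα : |α| < 1) {w : ℕ → ℝ} {N : ℕ}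
    (h0 : w 0 = α * w N) (h1 : w 1 = α * w (N + 1)) (hw : ∃ k < N + 2, w k ≠ 0) :
    0 < ∑ k ∈ range N, bdf2Difference w k * w (k + 2) := by
  have hα' : 0 < 1 - α ^ 2 := sub_pos.2 ((sq_lt_one_iff_abs_lt_one α).2 hα)
  set E := bdf2Energy (w (N + 1)) (w N)
  set D := ∑ k ∈ range N, (w (k + 2) - 2 * w (k + 1) + w k) ^ 2 / 4
  have hsum : ∑ k ∈ range N, bdf2Difference w k * w (k + 2) = (1 - α ^ 2) * E + D := by
    rw [sum_bdf2Difference_mul_self, h0, h1, bdf2Energy_mul_mul]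
    ring
  have hD_terms : ∀ k ∈ range N, 0 ≤ (w (k + 2) - 2 * w (k + 1) + w k) ^ 2 / 4 :=
    fun k _ ↦ by positivity
  have hE : 0 ≤ (1 - α ^ 2) * E := mul_nonneg hα'.le (bdf2Energy_nonneg _ _)
  have hD : 0 ≤ D := sum_nonneg hD_terms
  refine hsum ▸ (add_nonneg hE hD).lt_of_ne' fun hzero ↦ ?_
  obtain ⟨hE0, hD0⟩ := (add_eq_zero_iff_of_nonneg hE hD).1 hzero
  obtain ⟨hN1, hN⟩ := eq_zero_of_bdf2Energy_eq_zero ((mul_eq_zero_iff_left hα'.ne').1 hE0)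
  have hdiff : ∀ k < N, w (k + 2) - 2 * w (k + 1) + w k = 0 := fun k hk ↦ by
    simpa using (sum_eq_zero_iff_of_nonneg hD_terms).1 hD0 k (mem_range.2 hk)
  obtain ⟨k, hk, hwk⟩ := hw
  exact hwk (eq_zero_of_second_difference_eq_zero (by simp [h0, hN]) (by simp [h1, hN1]) hdiff k hk)

end GStability

section Strang

variable {N : ℕ} {α : ℝ}

/-- The operator sending `u : Fin N → ℝ` to the sequence `α u_{N-2}, α u_{N-1}, u_0, u_1, …`
obtained by prepending the two ghost values that `strangCalpha N α` imposes; the sequence is only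
meaningful up to index `N + 1`. -/
def ghostExtension (N : ℕ) (α : ℝ) : Matrix ℕ (Fin N) ℝ :=
  of fun k j ↦ if k = j + 2 then 1 else if k + N = j + 2 then α else 0

theorem ghostExtension_mulVec_add_two (u : Fin N → ℝ) (i : Fin N) :
    (ghostExtension N α *ᵥ u) (i + 2) = u i := by
  have hrow : ghostExtension N α (i + 2) = Pi.single i 1 := by
    ext j
    simp only [ghostExtension, of_apply, Pi.single_apply, Fin.ext_iff]
    grind
  rw [mulVec, hrow, single_one_dotProduct]

theorem ghostExtension_mulVec_of_lt_two (hN : 2 ≤ N) (u : Fin N → ℝ) {k : ℕ} (hk : k < 2) :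
    (ghostExtension N α *ᵥ u) k = α * (ghostExtension N α *ᵥ u) (N + k) := by
  have hrow : ghostExtension N α k = α • ghostExtension N α (N + k) := by
    ext j
    simp only [ghostExtension, of_apply, Pi.smul_apply, smul_eq_mul]
    grind
  rw [mulVec, hrow, smul_dotProduct, smul_eq_mul, mulVec]

theorem strangCalpha_apply_eq_bdf2Difference (hN : 3 ≤ N) (i j : Fin N) :
    strangCalpha N α i j = bdf2Difference (fun k ↦ ghostExtension N α k j) i := by
  simp only [strangCalpha, bdf2Difference, ghostExtension, of_apply]
  grind (splits := 12)

theorem strangCalpha_mulVec (hN : 3 ≤ N) (u : Fin N → ℝ) (i : Fin N) :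
    (strangCalpha N α *ᵥ u) i = bdf2Difference (ghostExtension N α *ᵥ u) i := by
  simp only [mulVec, dotProduct, strangCalpha_apply_eq_bdf2Difference hN, bdf2Difference, mul_sum,
    ← sum_sub_distrib, ← sum_add_distrib]
  exact sum_congr rfl fun j _ ↦ by ring

theorem dotProduct_strangCalpha_mulVec_pos (hN : 3 ≤ N) (hα : |α| < 1) {u : Fin N → ℝ}
    (hu : u ≠ 0) : 0 < u ⬝ᵥ (strangCalpha N α *ᵥ u) := by
  set w := ghostExtension N α *ᵥ u with hw
  have hwu (i : Fin N) : w (i + 2) = u i := ghostExtension_mulVec_add_two u i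
  have hdot : u ⬝ᵥ (strangCalpha N α *ᵥ u) =
      ∑ k ∈ range N, bdf2Difference w k * w (k + 2) := by
    rw [dotProduct_comm]
    simp only [← Fin.sum_univ_eq_sum_range fun k ↦ bdf2Difference w k * w (k + 2), dotProduct,
      strangCalpha_mulVec hN, hwu, ← hw]
  obtain ⟨i, hi⟩ := Function.ne_iff.1 hu
  rw [hdot]
  exact sum_bdf2Difference_mul_self_pos hα
    (ghostExtension_mulVec_of_lt_two (by lia) u zero_lt_two)
    (ghostExtension_mulVec_of_lt_two (by lia) u one_lt_two)
    ⟨i + 2, by lia, by rwa [hwu]⟩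

theorem bdf2C_apply_eq_strangCalpha_apply {i : Fin N} (hi : 2 ≤ (i : ℕ)) (j : Fin N) :
    bdf2C N i j = strangCalpha N α i j := by
  simp only [bdf2C, strangCalpha, of_apply]
  grind

theorem rank_bdf2C_sub_strangCalpha (hN : 3 ≤ N) (hα : α ≠ 0) :
    (bdf2C N - strangCalpha N α).rank = 2 := by
  let r : Fin 2 → Fin N := ![⟨0, by lia⟩, ⟨1, by lia⟩]
  let c : Fin 2 → Fin N := ![⟨0, by lia⟩, ⟨N - 1, by lia⟩]
  have hrows : Function.support (bdf2C N - strangCalpha N α).row ⊆ Set.range r := by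
    refine Function.support_subset_iff'.2 fun i hi ↦ funext fun j ↦ ?_
    have hi₂ : 2 ≤ (i : ℕ) := by
      simp only [r, range_cons, range_empty, Set.mem_union, Set.mem_singleton_iff] at hi
      grind
    exact sub_eq_zero.2 (bdf2C_apply_eq_strangCalpha_apply hi₂ j)
  have hsub : (bdf2C N - strangCalpha N α).submatrix r c = !![-1 / 2, 2 * α; 0, -α / 2] := by
    rw [eta_fin_two ((bdf2C N - strangCalpha N α).submatrix r c)]
    simp only [submatrix_apply, Matrix.sub_apply, bdf2C, strangCalpha, of_apply, r, c,
      cons_val_zero, cons_val_one]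
    congr <;> grind
  have hdet : ((bdf2C N - strangCalpha N α).submatrix r c).det = α / 4 := by
    rw [hsub, det_fin_two_of]
    ring
  simpa using rank_eq_card_of_det_submatrix_ne_zero _ r c hrows
    (hdet ▸ div_ne_zero hα four_ne_zero)

end Strang

theorem stmt14_general {n : Type*} [Fintype n] [DecidableEq n] {N : ℕ} (hN : 3 ≤ N) {α : ℝ}
    (hα₀ : α ≠ 0) (hα : |α| < 1) {A : Matrix n n ℝ} (hA : ∀ z, z ⬝ᵥ (A *ᵥ z) ≤ 0) {τ : ℝ}
    (hτ : 0 ≤ τ) :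
    (allAtOnce (strangCalpha N α) A τ)⁻¹ * allAtOnce (bdf2C N) A τ =
      1 + (allAtOnce (strangCalpha N α) A τ)⁻¹ *
        ((bdf2C N - strangCalpha N α) ⊗ₖ (1 : Matrix n n ℝ)) ∧
    (bdf2C N - strangCalpha N α).rank = 2 ∧
    ((allAtOnce (strangCalpha N α) A τ)⁻¹ *
        ((bdf2C N - strangCalpha N α) ⊗ₖ (1 : Matrix n n ℝ))).rank = 2 * Fintype.card n := by
  have hP : IsUnit (allAtOnce (strangCalpha N α) A τ).det :=
    (det_ne_zero_of_dotProduct_mulVec_pos fun _ ↦ dotProduct_allAtOnce_mulVec_pos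
      (fun _ ↦ dotProduct_strangCalpha_mulVec_pos hN hα) hA hτ).isUnit
  have hrank := rank_bdf2C_sub_strangCalpha hN hα₀
  refine ⟨?_, hrank, ?_⟩
  · rw [← allAtOnce_sub_allAtOnce _ _ A τ]
    exact inv_mul_eq_one_add_inv_mul_sub _ hP
  · rw [rank_mul_eq_right_of_isUnit_det _ _ (isUnit_nonsing_inv_det _ hP), rank_kronecker, hrank,
      rank_one]

/-- With `𝒜 = C ⊗ I − τ(I ⊗ A)`, `𝒫_α = C_α ⊗ I − τ(I ⊗ A)` and
`ℒ = 𝒫_α⁻¹ ((C − C_α) ⊗ I)`, one has `𝒫_α⁻¹ 𝒜 = I + ℒ`, `rank(C − C_α) = 2` and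
`rank(ℒ) = 2 N_s`. -/
theorem stmt14 (Nt Ns : ℕ) (hNt : 3 ≤ Nt) (hNs : 1 ≤ Ns) (α : ℝ)
    (hα : α ∈ Set.Ioo (0 : ℝ) 1)
    (A : Matrix (Fin Ns) (Fin Ns) ℝ) (hAsymm : A.IsSymm)
    (hAnsd : ∀ z : Fin Ns → ℝ, z ⬝ᵥ (A *ᵥ z) ≤ 0)
    (τ : ℝ) (hτ : 0 < τ) :
    (strangCalpha Nt α ⊗ₖ (1 : Matrix (Fin Ns) (Fin Ns) ℝ) -
          τ • ((1 : Matrix (Fin Nt) (Fin Nt) ℝ) ⊗ₖ A))⁻¹ *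
        (bdf2C Nt ⊗ₖ (1 : Matrix (Fin Ns) (Fin Ns) ℝ) -
          τ • ((1 : Matrix (Fin Nt) (Fin Nt) ℝ) ⊗ₖ A)) =
      1 + (strangCalpha Nt α ⊗ₖ (1 : Matrix (Fin Ns) (Fin Ns) ℝ) -
            τ • ((1 : Matrix (Fin Nt) (Fin Nt) ℝ) ⊗ₖ A))⁻¹ *
          ((bdf2C Nt - strangCalpha Nt α) ⊗ₖ (1 : Matrix (Fin Ns) (Fin Ns) ℝ)) ∧
    (bdf2C Nt - strangCalpha Nt α).rank = 2 ∧
    ((strangCalpha Nt α ⊗ₖ (1 : Matrix (Fin Ns) (Fin Ns) ℝ) -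
          τ • ((1 : Matrix (Fin Nt) (Fin Nt) ℝ) ⊗ₖ A))⁻¹ *
        ((bdf2C Nt - strangCalpha Nt α) ⊗ₖ (1 : Matrix (Fin Ns) (Fin Ns) ℝ))).rank =
      2 * Ns := by
  simpa using stmt14_general hNt hα.1.ne' (abs_lt.2 ⟨by linarith [hα.1], hα.2⟩) hAnsd hτ.le
end

section
/- Let γ ∈ (1,2) and for ℓ ∈ ℤ define the fractional centred difference coefficients ω_ℓ^{(γ)} = (−1)^ℓ·Γ(1+γ)/(Γ(1+γ/2−ℓ)·Γ(1+γ/2+ℓ)), where Γ is the real Gamma function. Then: (i) ω_0^{(γ)} > 0; (ii) ω_{−ℓ}^{(γ)} = ω_ℓ^{(γ)} for all ℓ ∈ ℤ; and (iii) ω_ℓ^{(γ)} < 0 for every ℓ with |ℓ| ≥ 1. -/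
open Real

/-- The fractional centred difference coefficients
`ω_ℓ^{(γ)} = (−1)^ℓ Γ(1+γ) / (Γ(1+γ/2−ℓ) Γ(1+γ/2+ℓ))`, `ℓ ∈ ℤ`,
where `Γ` is the real Gamma function. -/
noncomputable def omegaFCD (γ : ℝ) (l : ℤ) : ℝ :=
  (-1 : ℝ) ^ l * Real.Gamma (1 + γ) /
    (Real.Gamma (1 + γ / 2 - l) * Real.Gamma (1 + γ / 2 + l))

/-!
The identity `(Γ s)⁻¹ = s (Γ (s + 1))⁻¹` gives `(γ/2 + l + 1) ω_{l+1} = (l - γ/2) ω_l`. When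
`0 < γ < 2` the factor `l - γ/2` is negative for `l = 0` and positive for `l ≥ 1`, so the
coefficients change sign exactly once along `l ≥ 0`, between `ω_0 > 0` and `ω_1`; evenness in `l`
covers negative indices.
-/

-- No pole has to be excluded: `Real.Gamma` is `0` at the poles of `Γ`, so `(Real.Gamma s)⁻¹` agrees
-- everywhere with the entire function `1/Γ`.
theorem inv_Gamma_eq_mul_inv_Gamma_add_one (s : ℝ) :
    (Gamma s)⁻¹ = s * (Gamma (s + 1))⁻¹ := by
  have complex_identity := Complex.one_div_Gamma_eq_self_mul_one_div_Gamma_add_one s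
  rw [← Complex.ofReal_one, ← Complex.ofReal_add, Complex.Gamma_ofReal, Complex.Gamma_ofReal]
    at complex_identity
  exact_mod_cast complex_identity

theorem omegaFCD_neg (γ : ℝ) (l : ℤ) : omegaFCD γ (-l) = omegaFCD γ l := by
  have sign_neg : (-1 : ℝ) ^ (-l) = (-1) ^ l := by rw [← inv_zpow', inv_neg_one]
  rw [omegaFCD, omegaFCD, sign_neg, Int.cast_neg, sub_neg_eq_add, ← sub_eq_add_neg,
    mul_comm (Gamma (1 + γ / 2 + l))]

theorem omegaFCD_abs (γ : ℝ) (l : ℤ) : omegaFCD γ |l| = omegaFCD γ l := by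
  rcases abs_choice l with h | h
  · rw [h]
  · rw [h, omegaFCD_neg]

theorem omegaFCD_zero_pos {γ : ℝ} (hγ : -1 < γ) : 0 < omegaFCD γ 0 := by
  have numerator_pos : 0 < Gamma (1 + γ) := Gamma_pos_of_pos (by linarith)
  have factor_pos : 0 < Gamma (1 + γ / 2) := Gamma_pos_of_pos (by linarith)
  simpa only [omegaFCD, zpow_zero, one_mul, Int.cast_zero, sub_zero, add_zero] using
    div_pos numerator_pos (mul_pos factor_pos factor_pos)

theorem mul_omegaFCD_add_one (γ : ℝ) (l : ℤ) :
    (γ / 2 + l + 1) * omegaFCD γ (l + 1) = (l - γ / 2) * omegaFCD γ l := by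
  have upper := inv_Gamma_eq_mul_inv_Gamma_add_one (1 + γ / 2 + l)
  have lower : (Gamma (γ / 2 - l))⁻¹ = (γ / 2 - l) * (Gamma (1 + γ / 2 - l))⁻¹ := by
    rw [inv_Gamma_eq_mul_inv_Gamma_add_one, sub_add_eq_add_sub, add_comm (γ / 2) 1]
  have shifted : omegaFCD γ (l + 1) =
      -((-1) ^ l * Gamma (1 + γ)) * (Gamma (γ / 2 - l))⁻¹ * (Gamma (1 + γ / 2 + l + 1))⁻¹ := by
    rw [omegaFCD, zpow_add_one₀ (by norm_num), Int.cast_add, Int.cast_one, ← add_assoc,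
      show 1 + γ / 2 - ((l : ℝ) + 1) = γ / 2 - l by ring]
    ring
  calc (γ / 2 + l + 1) * omegaFCD γ (l + 1)
      = -((-1) ^ l * Gamma (1 + γ)) * (Gamma (γ / 2 - l))⁻¹ *
          ((1 + γ / 2 + l) * (Gamma (1 + γ / 2 + l + 1))⁻¹) := by rw [shifted]; ring
    _ = -((-1) ^ l * Gamma (1 + γ)) * ((γ / 2 - l) * (Gamma (1 + γ / 2 - l))⁻¹) *
          (Gamma (1 + γ / 2 + l))⁻¹ := by rw [lower, ← upper]
    _ = (l - γ / 2) * omegaFCD γ l := by rw [omegaFCD]; ring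

theorem omegaFCD_lt_zero {γ : ℝ} (hγ : γ ∈ Set.Ioo (0 : ℝ) 2) {l : ℤ} (hl : 1 ≤ l) :
    omegaFCD γ l < 0 := by
  obtain ⟨hγ0, hγ2⟩ := hγ
  induction l, hl using Int.leInduction with
  | base =>
    have recurrence : (γ / 2 + 1) * omegaFCD γ 1 = -(γ / 2) * omegaFCD γ 0 := by
      simpa using mul_omegaFCD_add_one γ 0
    have zero_pos : 0 < omegaFCD γ 0 := omegaFCD_zero_pos (by linarith)
    refine neg_of_mul_neg_right (a := γ / 2 + 1) ?_ (by linarith)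
    rw [recurrence]
    exact mul_neg_of_neg_of_pos (by linarith) zero_pos
  | succ l hl ih =>
    have one_le_cast : (1 : ℝ) ≤ l := by exact_mod_cast hl
    refine neg_of_mul_neg_right (a := γ / 2 + l + 1) ?_ (by linarith)
    rw [mul_omegaFCD_add_one]
    exact mul_neg_of_pos_of_neg (by linarith) ih

theorem stmt17_general (γ : ℝ) (hγ : γ ∈ Set.Ioo (0 : ℝ) 2) :
    0 < omegaFCD γ 0 ∧
      (∀ l : ℤ, omegaFCD γ (-l) = omegaFCD γ l) ∧
      (∀ l : ℤ, 1 ≤ |l| → omegaFCD γ l < 0) := by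
  refine ⟨omegaFCD_zero_pos (by linarith [hγ.1]), omegaFCD_neg γ, fun l hl ↦ ?_⟩
  rw [← omegaFCD_abs]
  exact omegaFCD_lt_zero hγ hl

/-- For `γ ∈ (1,2)`: (i) `ω_0^{(γ)} > 0`; (ii) `ω_{−ℓ}^{(γ)} = ω_ℓ^{(γ)}` for all `ℓ`;
(iii) `ω_ℓ^{(γ)} < 0` for every `ℓ` with `|ℓ| ≥ 1`. -/
theorem stmt17 (γ : ℝ) (hγ : γ ∈ Set.Ioo (1 : ℝ) 2) :
    0 < omegaFCD γ 0 ∧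
      (∀ l : ℤ, omegaFCD γ (-l) = omegaFCD γ l) ∧
      (∀ l : ℤ, 1 ≤ |l| → omegaFCD γ l < 0) :=
  stmt17_general γ (Set.Ioo_subset_Ioo_left zero_le_one hγ)
end
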